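/- arXiv:1712.08306 — 2 statements merged into one kernel-verified Lean document; each statement's English description precedes it below -/
import Mathlib

section
/- For every integer k with 1 ≤ k ≤ n, the bimoment determinants satisfy F_k^{(1,0)} = F_k^{(0,1)} = U_k²/2^k, F_k^{(1,1)} = W_k/2^k, and F_k^{(2,1)} = F_k^{(1,2)} = V_k²/2^k; in particular F_k^{(1,0)} > 0, F_k^{(1,1)} > 0 (equivalently W_k > 0), and F_k^{(2,1)} > 0. -/
open Finset

/-- Single moments `α_i = Σ_p ζ_p^i a_p`. -/
noncomputable def alphaM (n : ℕ) (ζ a : Fin n → ℝ) (i : ℤ) : ℝ :=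
  ∑ p : Fin n, ζ p ^ i * a p

/-- Bimoments `I_{i,j} = Σ_p Σ_q ζ_p^i ζ_q^j / (ζ_p + ζ_q) a_p a_q`. -/
noncomputable def Imom (n : ℕ) (ζ a : Fin n → ℝ) (i j : ℤ) : ℝ :=
  ∑ p : Fin n, ∑ q : Fin n, ζ p ^ i * ζ q ^ j / (ζ p + ζ q) * (a p * a q)

/-- `F_k^{(i,j)} = det (I_{i+r,j+s})_{0 ≤ r,s ≤ k-1}`, with `F_0 = 1` and `F_k = 0` for `k < 0`. -/
noncomputable def Fdet (n : ℕ) (ζ a : Fin n → ℝ) (i j k : ℤ) : ℝ :=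
  if k < 0 then 0
  else Matrix.det (Matrix.of fun r s : Fin k.toNat =>
    Imom n ζ a (i + ((r : ℕ) : ℤ)) (j + ((s : ℕ) : ℤ)))

/-- `G_k^{(i,j)}`: first column `(α_{i-1}, …, α_{i+k-2})ᵀ`, remaining block
`(I_{i+r,j+s})_{0 ≤ r ≤ k-1, 0 ≤ s ≤ k-2}`; `G_1 = α_{i-1}` and `G_k = 0` for `k < 1`. -/
noncomputable def Gdet (n : ℕ) (ζ a : Fin n → ℝ) (i j k : ℤ) : ℝ :=
  if k < 1 then 0
  else Matrix.det (Matrix.of fun r s : Fin k.toNat =>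
    if (s : ℕ) = 0 then alphaM n ζ a (i - 1 + ((r : ℕ) : ℤ))
    else Imom n ζ a (i + ((r : ℕ) : ℤ)) (j + (((s : ℕ) - 1 : ℕ) : ℤ)))

/-- `E_k^{(i,j)}`: `(1,1)` entry `0`, first row `(0, α_{j-1}, …, α_{j+k-3})`, first column
`(0, α_{i-1}, …, α_{i+k-3})ᵀ`, remaining block `(I_{i+r,j+s})_{0 ≤ r,s ≤ k-2}`;
`E_k = 0` for `k < 2`. -/
noncomputable def Edet (n : ℕ) (ζ a : Fin n → ℝ) (i j k : ℤ) : ℝ :=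
  if k < 2 then 0
  else Matrix.det (Matrix.of fun r s : Fin k.toNat =>
    if (r : ℕ) = 0 then
      (if (s : ℕ) = 0 then 0 else alphaM n ζ a (j - 1 + (((s : ℕ) - 1 : ℕ) : ℤ)))
    else if (s : ℕ) = 0 then alphaM n ζ a (i - 1 + (((r : ℕ) - 1 : ℕ) : ℤ))
    else Imom n ζ a (i + (((r : ℕ) - 1 : ℕ) : ℤ)) (j + (((s : ℕ) - 1 : ℕ) : ℤ)))

/-- `Δ_I = Π_{p<q, p,q ∈ I} (ζ_q - ζ_p)` (empty product `1`). -/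
noncomputable def DeltaI (n : ℕ) (ζ : Fin n → ℝ) (I : Finset (Fin n)) : ℝ :=
  ∏ p ∈ I, ∏ q ∈ I, if p < q then ζ q - ζ p else 1

/-- `Γ_I = Π_{p<q, p,q ∈ I} (ζ_q + ζ_p)` (empty product `1`). -/
noncomputable def GammaI (n : ℕ) (ζ : Fin n → ℝ) (I : Finset (Fin n)) : ℝ :=
  ∏ p ∈ I, ∏ q ∈ I, if p < q then ζ q + ζ p else 1

/-- `U_k = Σ_{I ⊆ {1,…,n}, |I| = k} (Δ_I²/Γ_I) Π_{j∈I} a_j`, with `U_0 = 1` and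
`U_k = 0` for `k < 0` and `k > n`. -/
noncomputable def Usum (n : ℕ) (ζ a : Fin n → ℝ) (k : ℤ) : ℝ :=
  if k < 0 ∨ (n : ℤ) < k then 0
  else ∑ I ∈ Finset.powersetCard k.toNat (Finset.univ : Finset (Fin n)),
    DeltaI n ζ I ^ 2 / GammaI n ζ I * ∏ j ∈ I, a j

/-- `V_k = Σ_{I ⊆ {1,…,n}, |I| = k} (Δ_I²/Γ_I) Π_{j∈I} ζ_j a_j`, with `V_0 = 1` and
`V_k = 0` for `k < 0` and `k > n`. -/
noncomputable def Vsum (n : ℕ) (ζ a : Fin n → ℝ) (k : ℤ) : ℝ :=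
  if k < 0 ∨ (n : ℤ) < k then 0
  else ∑ I ∈ Finset.powersetCard k.toNat (Finset.univ : Finset (Fin n)),
    DeltaI n ζ I ^ 2 / GammaI n ζ I * ∏ j ∈ I, ζ j * a j

/-- `W_k = V_k U_k - V_{k-1} U_{k+1}` (so `W_0 = 1`, `W_k = 0` for `k < 0` and `k > n`). -/
noncomputable def Wsum (n : ℕ) (ζ a : Fin n → ℝ) (k : ℤ) : ℝ :=
  Vsum n ζ a k * Usum n ζ a k - Vsum n ζ a (k - 1) * Usum n ζ a (k + 1)

/-! Two applications of the Cauchy–Binet formula, followed by the Vandermonde and Cauchy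
determinants, expand a bimoment determinant into a sum of explicit positive terms over pairs
`(I, J)` of `k`-element sets of nodes. This gives positivity.

The products `U_k²`, `V_k U_k` and `V_{k-1} U_{k+1}` are also sums over pairs `(I, J)`. Among the
pairs with a given intersection `K` and symmetric difference `S`, both kinds of terms have a common
factor, and what remains is an identity between sums over the splittings `S = A ⊔ B`. It is proved
by induction on `#S = 2m + 2`: as a polynomial in one node, the difference of the two sides has
degree at most `3m + 2`, while the identity for `S` with two nodes removed makes it divisible by
`(x_j - X)²` for each of the other `2m + 1` nodes `x_j`. For `m ≥ 1` this forces it to vanish, and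
`m = 0` is a direct computation.

Multiplying the weights `a_p` by the nodes shifts both indices of the bimoments by one and turns
`U_k` into `V_k`, so the pair `(2, 1)` reduces to `(1, 0)`. -/

open Polynomial

section PairProducts

variable {ι M : Type*} [CommMonoid M]

/-- The product of `s p q` over the pairs `p < q` of elements of `A`; for symmetric `s` this is the
product over unordered pairs, independent of the order of `ι`. -/
def pairProd [LinearOrder ι] (s : ι → ι → M) (A : Finset ι) : M :=
  ∏ p ∈ A, ∏ q ∈ A, if p < q then s p q else 1

/-- The product of `s p q` over `p ∈ A` and `q ∈ B`. -/
def crossProd (s : ι → ι → M) (A B : Finset ι) : M :=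
  ∏ p ∈ A, ∏ q ∈ B, s p q

lemma crossProd_comm {s : ι → ι → M} (hs : ∀ p q, s p q = s q p) (A B : Finset ι) :
    crossProd s A B = crossProd s B A := by
  rw [crossProd, prod_comm]
  simp only [crossProd, hs]

section DecidableEq

variable [DecidableEq ι]

lemma crossProd_insert_left (s : ι → ι → M) {i : ι} {A : Finset ι} (hi : i ∉ A) (B : Finset ι) :
    crossProd s (insert i A) B = (∏ b ∈ B, s i b) * crossProd s A B :=
  prod_insert hi

lemma crossProd_insert_right {s : ι → ι → M} (hs : ∀ p q, s p q = s q p) (A : Finset ι)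
    {i : ι} {B : Finset ι} (hi : i ∉ B) :
    crossProd s A (insert i B) = (∏ a ∈ A, s i a) * crossProd s A B := by
  rw [crossProd_comm hs, crossProd_insert_left s hi, crossProd_comm hs]

lemma crossProd_union_left (s : ι → ι → M) {A B : Finset ι} (hAB : Disjoint A B) (C : Finset ι) :
    crossProd s (A ∪ B) C = crossProd s A C * crossProd s B C :=
  prod_union hAB

lemma crossProd_union_right {s : ι → ι → M} (hs : ∀ p q, s p q = s q p) (A : Finset ι)
    {B C : Finset ι} (hBC : Disjoint B C) :
    crossProd s A (B ∪ C) = crossProd s A B * crossProd s A C := by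
  rw [crossProd_comm hs, crossProd_union_left s hBC, crossProd_comm hs, crossProd_comm hs C]

end DecidableEq

variable [LinearOrder ι]

lemma pairProd_insert {s : ι → ι → M} (hs : ∀ p q, s p q = s q p) {i : ι} {A : Finset ι}
    (hi : i ∉ A) : pairProd s (insert i A) = (∏ a ∈ A, s i a) * pairProd s A := by
  have pair_with_i : ∀ a ∈ A,
      (if i < a then s i a else 1) * (if a < i then s a i else 1) = s i a := by
    intro a ha
    rcases lt_or_gt_of_ne (ne_of_mem_of_not_mem ha hi) with h | h
    · simp [h, h.not_gt, hs a i]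
    · simp [h, h.not_gt]
  simp only [pairProd, prod_insert hi, lt_irrefl, if_false, one_mul, prod_mul_distrib]
  rw [← mul_assoc, ← prod_mul_distrib, prod_congr rfl pair_with_i]

lemma pairProd_union {s : ι → ι → M} (hs : ∀ p q, s p q = s q p) {A B : Finset ι}
    (hAB : Disjoint A B) :
    pairProd s (A ∪ B) = pairProd s A * pairProd s B * crossProd s A B := by
  induction A using Finset.induction_on with
  | empty => simp [pairProd, crossProd]
  | insert i A hi ih =>
    rw [disjoint_insert_left] at hAB
    rw [insert_union, pairProd_insert hs (notMem_union.2 ⟨hi, hAB.1⟩), pairProd_insert hs hi,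
      ih hAB.2, crossProd_insert_left s hi, prod_union hAB.2]
    ac_rfl

lemma pairProd_map_orderEmb {k : ℕ} (s : ι → ι → M) (e : Fin k ↪o ι) :
    pairProd s (univ.map e.toEmbedding) = ∏ r, ∏ t ∈ Ioi r, s (e r) (e t) := by
  simp only [pairProd, prod_map, RelEmbedding.coe_toEmbedding, e.lt_iff_lt]
  refine prod_congr rfl fun r _ ↦ ?_
  rw [← prod_filter, filter_lt_eq_Ioi]

end PairProducts

section Kernels

variable {ι R : Type*} [CommRing R]

/-- The factor `(x_q - x_p)²` of the discriminant of the nodes `x`. -/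
def diffSq (x : ι → R) (p q : ι) : R := (x q - x p) ^ 2

/-- The factor `x_q + x_p` of `Γ_I`, and the denominator of the bimoments. -/
def pairSum (x : ι → R) (p q : ι) : R := x q + x p

lemma diffSq_comm (x : ι → R) (p q : ι) : diffSq x p q = diffSq x q p := sub_sq_comm _ _

lemma pairSum_comm (x : ι → R) (p q : ι) : pairSum x p q = pairSum x q p := add_comm _ _

lemma crossProd_pairSum_self [LinearOrder ι] (x : ι → R) (K : Finset ι) :
    crossProd (pairSum x) K K = 2 ^ #K * (∏ p ∈ K, x p) * pairProd (pairSum x) K ^ 2 := by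
  induction K using Finset.induction_on with
  | empty => simp [pairProd, crossProd]
  | insert i K hi ih =>
    rw [crossProd_insert_left _ hi, crossProd_insert_right (pairSum_comm x) _ hi, ih,
      pairProd_insert (pairSum_comm x) hi, prod_insert hi, prod_insert hi, card_insert_of_notMem hi,
      pairSum]
    ring

end Kernels

section SplitFactors

variable {ι R : Type*} [CommRing R]

/-- The factor that a node of value `t` contributes when it joins the side `A` of a splitting
`A ⊔ B` of the nodes `x`; see `splitTerm` for the exponents. -/
def splitFactor (c d e : ℕ) (x : ι → R) (t : R) (A B : Finset ι) : R :=
  t ^ e * (∏ a ∈ A, (x a - t) ^ 2) * (∏ a ∈ A, (x a + t)) ^ c * (∏ b ∈ B, (x b + t)) ^ d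

variable (c d e f : ℕ) (x : ι → R)

lemma map_splitFactor {R' : Type*} [CommRing R'] (φ : R →+* R') (t : R) (A B : Finset ι) :
    φ (splitFactor c d e x t A B) = splitFactor c d e (φ ∘ x) (φ t) A B := by
  simp [splitFactor]

lemma sub_dvd_splitFactor_sub (s t : R) (A B : Finset ι) :
    s - t ∣ splitFactor c d e x s A B - splitFactor c d e x t A B := by
  have eval_splitFactor (r : R) :
      (splitFactor c d e (C ∘ x) X A B).eval r = splitFactor c d e x r A B := by
    simp [splitFactor, eval_prod]
  simpa only [eval_splitFactor] using sub_dvd_eval_sub s t (splitFactor c d e (C ∘ x) X A B)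

lemma natDegree_splitFactor_le (A B : Finset ι) :
    (splitFactor c d e (C ∘ x) X A B).natDegree ≤ e + (2 + c) * #A + d * #B := by
  have natDegree_prod_linear {F : ι → R[X]} {N : ℕ} (hF : ∀ a, (F a).natDegree ≤ N)
      (T : Finset ι) : (∏ a ∈ T, F a).natDegree ≤ #T * N :=
    (natDegree_prod_le _ _).trans (sum_le_card_nsmul _ _ _ fun a _ ↦ hF a)
  have natDegree_sub_sq_le (a : ι) : (((C ∘ x) a - X) ^ 2).natDegree ≤ 2 := by
    simp only [Function.comp_apply]
    compute_degree
  have natDegree_add_le_one (a : ι) : ((C ∘ x) a + X).natDegree ≤ 1 := by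
    simp only [Function.comp_apply]
    compute_degree
  calc _ ≤ e + #A * 2 + c * (#A * 1) + d * (#B * 1) :=
        natDegree_mul_le_of_le (natDegree_mul_le_of_le (natDegree_mul_le_of_le
          (natDegree_X_pow_le e) (natDegree_prod_linear natDegree_sub_sq_le A))
          (natDegree_pow_le_of_le c (natDegree_prod_linear natDegree_add_le_one A)))
          (natDegree_pow_le_of_le d (natDegree_prod_linear natDegree_add_le_one B))
    _ = e + (2 + c) * #A + d * #B := by ring

variable [DecidableEq ι]

lemma splitFactor_insert_left (t : R) {j : ι} {A : Finset ι} (hj : j ∉ A) (B : Finset ι) :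
    splitFactor c d e x t (insert j A) B =
      (x j - t) ^ 2 * ((x j + t) ^ c * splitFactor c d e x t A B) := by
  simp only [splitFactor, prod_insert hj, mul_pow]
  ring

lemma splitFactor_insert_right (t : R) {j : ι} (A : Finset ι) {B : Finset ι} (hj : j ∉ B) :
    splitFactor c d e x t A (insert j B) = (x j + t) ^ d * splitFactor c d e x t A B := by
  simp only [splitFactor, prod_insert hj, mul_pow]
  ring

lemma splitFactor_mul_splitFactor_swap (t : R) {A B : Finset ι} (hAB : Disjoint A B) :
    splitFactor c d e x t A B * splitFactor c d f x t B A =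
      splitFactor (c + d) 0 (e + f) x t (A ∪ B) ∅ := by
  simp only [splitFactor, prod_union hAB]
  ring

end SplitFactors

lemma sum_powerset_insert_sdiff {ι N : Type*} [DecidableEq ι] [AddCommMonoid N]
    (G : Finset ι → Finset ι → N) {i : ι} {S : Finset ι} (hi : i ∉ S) :
    ∑ A ∈ (insert i S).powerset, G A (insert i S \ A) =
      ∑ A ∈ S.powerset, (G A (insert i (S \ A)) + G (insert i A) (S \ A)) := by
  rw [sum_powerset_insert hi, ← sum_add_distrib]
  refine sum_congr rfl fun A hA ↦ ?_
  have hiA : i ∉ A := fun h ↦ hi (mem_powerset.1 hA h)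
  rw [insert_sdiff_of_notMem _ hiA, insert_sdiff_insert, sdiff_insert_of_notMem hi]

section SplitSums

variable {ι R : Type*} [LinearOrder ι] [CommRing R]

/-- The contribution of the splitting `A ⊔ B` of a set of nodes `x`: nodes on the same side meet in
`(x_q - x_p)² (x_q + x_p) ^ c`, nodes on opposite sides in `(x_q + x_p) ^ d`, and the nodes of `A`
and `B` carry the additional powers `e` and `f`. -/
def splitTerm (c d e f : ℕ) (x : ι → R) (A B : Finset ι) : R :=
  (∏ a ∈ A, x a) ^ e * (∏ b ∈ B, x b) ^ f *
    (pairProd (diffSq x) A * pairProd (diffSq x) B) *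
    (pairProd (pairSum x) A * pairProd (pairSum x) B) ^ c * crossProd (pairSum x) A B ^ d

/-- The sum of `splitTerm` over all splittings `A ⊔ B = S`, weighted by a function `u` of the
imbalance `#A - #B`, a quantity unchanged when one node is added to each side. -/
def splitSum (u : ℤ → ℤ) (c d e f : ℕ) (x : ι → R) (S : Finset ι) : R :=
  ∑ A ∈ S.powerset, u (#A - #(S \ A)) * splitTerm c d e f x A (S \ A)

/-- The value of `splitSum` on `S` together with one more node, as a function of the value `t` of
that node. -/
def adjoinedSplitSum (u : ℤ → ℤ) (c d e f : ℕ) (x : ι → R) (t : R) (S : Finset ι) : R :=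
  ∑ A ∈ S.powerset,
    (u (#A - #(S \ A) + 1) * splitFactor c d e x t A (S \ A) +
      u (#A - #(S \ A) - 1) * splitFactor c d f x t (S \ A) A) * splitTerm c d e f x A (S \ A)

variable (u : ℤ → ℤ) (c d e f : ℕ) (x : ι → R)

lemma splitTerm_insert_left {i : ι} {A : Finset ι} (hi : i ∉ A) (B : Finset ι) :
    splitTerm c d e f x (insert i A) B =
      splitFactor c d e x (x i) A B * splitTerm c d e f x A B := by
  rw [splitTerm, prod_insert hi, pairProd_insert (diffSq_comm x) hi,
    pairProd_insert (pairSum_comm x) hi, crossProd_insert_left _ hi, splitTerm, splitFactor]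
  simp only [diffSq, pairSum]
  ring

lemma splitTerm_swap (A B : Finset ι) : splitTerm c d e f x A B = splitTerm c d f e x B A := by
  rw [splitTerm, splitTerm, crossProd_comm (pairSum_comm x)]
  ring

lemma splitTerm_insert_right {i : ι} (A : Finset ι) {B : Finset ι} (hi : i ∉ B) :
    splitTerm c d e f x A (insert i B) =
      splitFactor c d f x (x i) B A * splitTerm c d e f x A B := by
  rw [splitTerm_swap, splitTerm_insert_left _ _ _ _ _ hi, splitTerm_swap]

lemma map_splitTerm {R' : Type*} [CommRing R'] (φ : R →+* R') (A B : Finset ι) :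
    φ (splitTerm c d e f x A B) = splitTerm c d e f (φ ∘ x) A B := by
  simp [splitTerm, pairProd, crossProd, diffSq, pairSum, apply_ite φ]

lemma map_splitSum {R' : Type*} [CommRing R'] (φ : R →+* R') (S : Finset ι) :
    φ (splitSum u c d e f x S) = splitSum u c d e f (φ ∘ x) S := by
  simp [splitSum, map_splitTerm]

lemma map_adjoinedSplitSum {R' : Type*} [CommRing R'] (φ : R →+* R') (t : R) (S : Finset ι) :
    φ (adjoinedSplitSum u c d e f x t S) = adjoinedSplitSum u c d e f (φ ∘ x) (φ t) S := by
  simp [adjoinedSplitSum, map_splitFactor, map_splitTerm]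

lemma splitSum_insert {i : ι} {S : Finset ι} (hi : i ∉ S) :
    splitSum u c d e f x (insert i S) = adjoinedSplitSum u c d e f x (x i) S := by
  rw [splitSum, sum_powerset_insert_sdiff (fun A B ↦ u (#A - #B) * splitTerm c d e f x A B) hi]
  refine sum_congr rfl fun A hA ↦ ?_
  have hiA : i ∉ A := fun h ↦ hi (mem_powerset.1 hA h)
  have hiB : i ∉ S \ A := fun h ↦ hi (mem_sdiff.1 h).1
  rw [splitTerm_insert_left _ _ _ _ _ hiA, splitTerm_insert_right _ _ _ _ _ _ hiB,
    card_insert_of_notMem hiA, card_insert_of_notMem hiB]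
  push_cast
  rw [← sub_sub, add_sub_right_comm]
  ring

/-- Only the splittings that separate the adjoined node from `j` are not visibly multiples of
`(x j - t) ^ 2`, and they come in pairs exchanging the two nodes. -/
lemma sq_sub_dvd_adjoined_pair (t : R) {j : ι} {A B : Finset ι} (hAB : Disjoint A B)
    (hjA : j ∉ A) (hjB : j ∉ B) (v w z : R) :
    (x j - t) ^ 2 ∣
      (v * splitFactor c d e x t A (insert j B) + w * splitFactor c d f x t (insert j B) A) *
        splitTerm c d e f x A (insert j B) +
      (z * splitFactor c d e x t (insert j A) B + v * splitFactor c d f x t B (insert j A)) *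
        splitTerm c d e f x (insert j A) B -
      (x j + t) ^ d * (splitFactor (c + d) 0 (e + f) x t (A ∪ B) ∅ +
        splitFactor (c + d) 0 (e + f) x (x j) (A ∪ B) ∅) * (v * splitTerm c d e f x A B) := by
  obtain ⟨p, hp⟩ := sub_dvd_splitFactor_sub c d e x (x j) t A B
  obtain ⟨q, hq⟩ := sub_dvd_splitFactor_sub c d f x (x j) t B A
  simp only [splitFactor_insert_left _ _ _ _ _ hjA, splitFactor_insert_left _ _ _ _ _ hjB,
    splitFactor_insert_right _ _ _ _ _ _ hjA, splitFactor_insert_right _ _ _ _ _ _ hjB,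
    splitTerm_insert_left _ _ _ _ _ hjA, splitTerm_insert_right _ _ _ _ _ _ hjB,
    ← splitFactor_mul_splitFactor_swap _ _ _ _ _ _ hAB]
  refine ⟨(x j + t) ^ c * splitTerm c d e f x A B *
    (w * splitFactor c d f x t B A * splitFactor c d f x (x j) B A +
      z * splitFactor c d e x t A B * splitFactor c d e x (x j) A B) -
    v * (x j + t) ^ d * splitTerm c d e f x A B * (p * q), ?_⟩
  linear_combination -v * (x j + t) ^ d * splitTerm c d e f x A B *
    ((splitFactor c d f x (x j) B A - splitFactor c d f x t B A) * hp + (x j - t) * p * hq)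

lemma sq_sub_dvd_adjoinedSplitSum_insert_sub (t : R) {j : ι} {S : Finset ι} (hj : j ∉ S) :
    (x j - t) ^ 2 ∣ adjoinedSplitSum u c d e f x t (insert j S) -
      (x j + t) ^ d * (splitFactor (c + d) 0 (e + f) x t S ∅ +
        splitFactor (c + d) 0 (e + f) x (x j) S ∅) * splitSum u c d e f x S := by
  rw [adjoinedSplitSum, sum_powerset_insert_sdiff (fun A B ↦
    (u (#A - #B + 1) * splitFactor c d e x t A B + u (#A - #B - 1) * splitFactor c d f x t B A) *
      splitTerm c d e f x A B) hj, splitSum, mul_sum, ← sum_sub_distrib]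
  refine dvd_sum fun A hA ↦ ?_
  have hAS := mem_powerset.1 hA
  have hjA : j ∉ A := fun h ↦ hj (hAS h)
  have hjB : j ∉ S \ A := fun h ↦ hj (mem_sdiff.1 h).1
  have key := sq_sub_dvd_adjoined_pair c d e f x t disjoint_sdiff hjA hjB
    (u (#A - #(S \ A))) (u (#A - #(S \ A) - 2)) (u (#A - #(S \ A) + 2))
  rw [union_sdiff_of_subset hAS] at key
  have imbalance_left (r s : ℤ) : r - (s + 1) + 1 = r - s ∧ r - (s + 1) - 1 = r - s - 2 := by
    constructor <;> ring
  have imbalance_right (r s : ℤ) : r + 1 - s + 1 = r - s + 2 ∧ r + 1 - s - 1 = r - s := by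
    constructor <;> ring
  rwa [card_insert_of_notMem hjA, card_insert_of_notMem hjB, Nat.cast_succ, Nat.cast_succ,
    (imbalance_left _ _).1, (imbalance_left _ _).2, (imbalance_right _ _).1,
    (imbalance_right _ _).2]

end SplitSums

lemma eq_zero_of_sq_dvd_of_natDegree_lt {ι K : Type*} [Field K] {x : ι → K} {S : Finset ι}
    (hx : Set.InjOn x S) {p : K[X]} (hdvd : ∀ j ∈ S, (C (x j) - X) ^ 2 ∣ p)
    (hdeg : p.natDegree < 2 * #S) : p = 0 := by
  have prod_dvd : ∏ j ∈ S, (X - C (x j)) ^ 2 ∣ p := by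
    refine prod_dvd_of_coprime (fun i hi j hj hij ↦ ?_) fun j hj ↦ ?_
    · exact (isCoprime_X_sub_C_of_isUnit_sub (sub_ne_zero.2 (hx.ne hi hj hij)).isUnit).pow
    · rw [sub_sq_comm]
      exact hdvd j hj
  refine eq_zero_of_dvd_of_natDegree_lt prod_dvd (hdeg.trans_eq ?_)
  rw [natDegree_prod_of_monic _ _ fun j _ ↦ (monic_X_sub_C _).pow 2]
  simp [mul_comm]

section SplitIdentity

variable {ι : Type*} [LinearOrder ι]

/-- The weight that selects the balanced splittings and subtracts `l` times those in which the
second side has two more elements than the first. -/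
def imbalanceWeight (l : ℕ) (d : ℤ) : ℤ := if d = 0 then 1 else if d = -2 then -l else 0

/-- The difference of the two sides of `two_pow_mul_splitSum` for `m + 1` and the set `S` of
`2 * m + 1` nodes together with one more node of value `t`. -/
def splitDefect {R : Type*} [CommRing R] (l m : ℕ) (x : ι → R) (t : R) (S : Finset ι) : R :=
  2 ^ (m + 1) * adjoinedSplitSum (imbalanceWeight 0) 1 0 1 l x t S -
    adjoinedSplitSum (imbalanceWeight l) 0 1 l 0 x t S

lemma sq_sub_dvd_splitDefect_insert {R : Type*} [CommRing R] {l m : ℕ} {x : ι → R} {j : ι}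
    {S : Finset ι} (hj : j ∉ S)
    (hS : 2 ^ m * splitSum (imbalanceWeight 0) 1 0 1 l x S =
      splitSum (imbalanceWeight l) 0 1 l 0 x S)
    (t : R) : (x j - t) ^ 2 ∣ splitDefect l m x t (insert j S) := by
  obtain ⟨p, hp⟩ := sq_sub_dvd_adjoinedSplitSum_insert_sub (imbalanceWeight 0) 1 0 1 l x t hj
  obtain ⟨q, hq⟩ := sq_sub_dvd_adjoinedSplitSum_insert_sub (imbalanceWeight l) 0 1 l 0 x t hj
  obtain ⟨r, hr⟩ := sub_dvd_splitFactor_sub 1 0 l x (x j) t S ∅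
  have left_factor (s : R) :
      splitFactor (1 + 0) 0 (1 + l) x s S ∅ = s * splitFactor 1 0 l x s S ∅ := by
    simp only [splitFactor]
    ring
  simp only [left_factor, zero_add, add_zero, pow_zero, pow_one] at hp hq
  refine ⟨2 ^ (m + 1) * p - q + r * splitSum (imbalanceWeight l) 0 1 l 0 x S, ?_⟩
  rw [splitDefect]
  linear_combination 2 ^ (m + 1) * hp - hq +
    (x j - t) * splitSum (imbalanceWeight l) 0 1 l 0 x S * hr +
    2 * (t * splitFactor 1 0 l x t S ∅ + x j * splitFactor 1 0 l x (x j) S ∅) * hS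

lemma map_splitDefect {R R' : Type*} [CommRing R] [CommRing R'] (φ : R →+* R') (l m : ℕ)
    (x : ι → R) (t : R) (S : Finset ι) :
    φ (splitDefect l m x t S) = splitDefect l m (φ ∘ x) (φ t) S := by
  simp only [splitDefect, map_sub, map_mul, map_pow, map_ofNat, map_adjoinedSplitSum]

lemma natDegree_adjoinedSplitSum_le {R : Type*} [CommRing R] {u : ℤ → ℤ} {c d e f N : ℕ}
    (x : ι → R) {S : Finset ι}
    (hA : ∀ A ⊆ S, u (#A - #(S \ A) + 1) ≠ 0 → e + (2 + c) * #A + d * #(S \ A) ≤ N)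
    (hB : ∀ A ⊆ S, u (#A - #(S \ A) - 1) ≠ 0 → f + (2 + c) * #(S \ A) + d * #A ≤ N) :
    (adjoinedSplitSum u c d e f (C ∘ x) X S).natDegree ≤ N := by
  have natDegree_weighted_le {w : ℤ} {F : R[X]} {D : ℕ} (hF : F.natDegree ≤ D)
      (hD : w ≠ 0 → D ≤ N) : ((w : R[X]) * F).natDegree ≤ N := by
    obtain rfl | hw := eq_or_ne w 0
    · simp
    · rw [← C_eq_intCast]
      exact (natDegree_C_mul_le _ _).trans (hF.trans (hD hw))
  refine natDegree_sum_le_of_forall_le _ _ fun A hAS ↦ ?_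
  rw [← map_splitTerm]
  refine (natDegree_mul_C_le _ _).trans (natDegree_add_le_of_degree_le ?_ ?_)
  · exact natDegree_weighted_le (natDegree_splitFactor_le ..) (hA A (mem_powerset.1 hAS))
  · exact natDegree_weighted_le (natDegree_splitFactor_le ..) (hB A (mem_powerset.1 hAS))

lemma natDegree_splitDefect_le {R : Type*} [CommRing R] {l m : ℕ} (hl : l ≤ 1) (x : ι → R)
    {S : Finset ι} (hS : #S = 2 * m + 1) :
    (splitDefect l m (C ∘ x) X S).natDegree ≤ 3 * m + 2 := by
  have card_add {A : Finset ι} (hA : A ⊆ S) : #(S \ A) + #A = 2 * m + 1 :=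
    hS ▸ card_sdiff_add_card_eq_card hA
  have two_pow : (2 : R[X]) ^ (m + 1) = C (2 ^ (m + 1)) := by
    simp only [map_pow, map_ofNat]
  rw [splitDefect, two_pow]
  refine (natDegree_sub_le _ _).trans (max_le ((natDegree_C_mul_le _ _).trans ?_) ?_) <;>
  · refine natDegree_adjoinedSplitSum_le x (fun A hA hu ↦ ?_) fun A hA hu ↦ ?_ <;>
    · have := card_add hA
      simp only [imbalanceWeight] at hu
      split_ifs at hu <;> omega

variable {K : Type*} [Field K]

lemma splitDefect_zero_singleton {l : ℕ} (hl : l ≤ 1) (x : ι → K) (t : K) (j : ι) :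
    splitDefect l 0 x t {j} = 0 := by
  simp only [splitDefect, adjoinedSplitSum, ← insert_empty_eq j,
    sum_powerset_insert (notMem_empty j)]
  interval_cases l <;>
  · simp [splitFactor, splitTerm, pairProd, crossProd, imbalanceWeight]
    ring

theorem two_pow_mul_splitSum {l : ℕ} (hl : l ≤ 1) {m : ℕ} {x : ι → K} {S : Finset ι}
    (hS : #S = 2 * m) (hx : Set.InjOn x S) :
    2 ^ m * splitSum (imbalanceWeight 0) 1 0 1 l x S =
      splitSum (imbalanceWeight l) 0 1 l 0 x S := by
  induction m generalizing S with
  | zero =>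
    rw [card_eq_zero.1 hS]
    simp [splitSum, splitTerm, pairProd, crossProd, imbalanceWeight]
  | succ m ih =>
    obtain ⟨i, T, hi, rfl, (hT : #T = 2 * m + 1)⟩ := card_eq_succ.1 hS
    rw [splitSum_insert _ _ _ _ _ _ hi, splitSum_insert _ _ _ _ _ _ hi, ← sub_eq_zero]
    change splitDefect l m x (x i) T = 0
    obtain rfl | hm := Nat.eq_zero_or_pos m
    · obtain ⟨j, rfl⟩ := card_eq_one.1 hT
      exact splitDefect_zero_singleton hl x (x i) j
    have defect_eq_zero : splitDefect l m (C ∘ x) X T = 0 := by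
      refine eq_zero_of_sq_dvd_of_natDegree_lt (hx.mono (subset_insert i T)) (fun j hj ↦ ?_)
        ((natDegree_splitDefect_le hl x hT).trans_lt (by omega))
      have hjT : #(T.erase j) = 2 * m := by rw [card_erase_of_mem hj, hT]; omega
      have split_identity := ih hjT (hx.mono ((erase_subset j T).trans (subset_insert i T)))
      have := sq_sub_dvd_splitDefect_insert (x := C ∘ x) (notMem_erase j T)
        (by simpa only [map_mul, map_pow, map_ofNat, map_splitSum] using
          congr_arg C split_identity) X
      rwa [insert_erase hj] at this
    simpa [map_splitDefect, Function.comp_def] using congr_arg (evalRingHom (x i)) defect_eq_zero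

end SplitIdentity

section PairSums

variable {ι R : Type*} [Fintype ι]

/-- The sum of `F I J` over the pairs of subsets with `#I + #J = 2 * k`, weighted by a function `u`
of the imbalance `#I - #J`. -/
def balancedSum [CommRing R] (u : ℤ → ℤ) (k : ℕ) (F : Finset ι → Finset ι → R) : R :=
  ∑ I, ∑ J, if #I + #J = 2 * k then u (#I - #J) * F I J else 0

lemma sum_powersetCard_sum_powersetCard [AddCommMonoid R] (k l : ℕ) (F : Finset ι → Finset ι → R) :
    ∑ I ∈ powersetCard k univ, ∑ J ∈ powersetCard l univ, F I J =
      ∑ I, ∑ J, if #I = k ∧ #J = l then F I J else 0 := by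
  simp only [powersetCard_eq_filter, powerset_univ, sum_filter, ite_sum_zero, ite_and]

lemma balancedSum_imbalanceWeight [CommRing R] (l k : ℕ) (F : Finset ι → Finset ι → R) :
    balancedSum (imbalanceWeight l) (k + 1) F =
      ∑ I ∈ powersetCard (k + 1) univ, ∑ J ∈ powersetCard (k + 1) univ, F I J -
        l * ∑ I ∈ powersetCard k univ, ∑ J ∈ powersetCard (k + 2) univ, F I J := by
  simp only [balancedSum, sum_powersetCard_sum_powersetCard, mul_sum, ← sum_sub_distrib]
  refine sum_congr rfl fun I _ ↦ sum_congr rfl fun J _ ↦ ?_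
  simp only [imbalanceWeight]
  split_ifs <;> first | omega | simp

variable [DecidableEq ι]

/-- A pair of sets is determined by its intersection `K`, its symmetric difference `S`, and the part
`A` of `S` that lies in the first set. -/
lemma sum_pairs_eq_sum_splittings [AddCommMonoid R] (F : Finset ι → Finset ι → R) :
    ∑ I, ∑ J, F I J = ∑ K, ∑ S ∈ Kᶜ.powerset, ∑ A ∈ S.powerset, F (K ∪ A) (K ∪ (S \ A)) := by
  have recover_left (I J : Finset ι) : I ∩ J ∪ I \ J = I := by rw [union_comm, sdiff_union_inter]
  have recover_right (I J : Finset ι) : I ∩ J ∪ symmDiff I J \ (I \ J) = J := by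
    ext i
    simp only [mem_union, mem_inter, mem_sdiff, mem_symmDiff]
    tauto
  simp only [sum_sigma']
  refine sum_bij' (fun p _ ↦ ⟨p.1 ∩ p.2, symmDiff p.1 p.2, p.1 \ p.2⟩)
    (fun q _ ↦ ⟨q.1 ∪ q.2.2, q.1 ∪ (q.2.1 \ q.2.2)⟩) ?_ (by simp) ?_ ?_ ?_
  · rintro ⟨I, J⟩ -
    simp only [mem_sigma, mem_univ, mem_powerset, true_and]
    exact ⟨fun i ↦ by simp only [mem_symmDiff, mem_compl, mem_inter]; tauto, subset_union_left⟩
  · rintro ⟨I, J⟩ -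
    simp only [recover_left, recover_right]
  · rintro ⟨K, S, A⟩ h
    simp only [mem_sigma, mem_univ, mem_powerset, true_and] at h
    have inter_eq : (K ∪ A) ∩ (K ∪ S \ A) = K := by
      rw [← union_inter_distrib_left, inter_sdiff_self, union_empty]
    have sdiff_eq : (K ∪ A) \ (K ∪ S \ A) = A := by
      ext i
      have hS := @h.1 i
      simp only [mem_union, mem_sdiff, mem_compl] at hS ⊢
      have hA := @h.2 i
      tauto
    have symmDiff_eq : symmDiff (K ∪ A) (K ∪ S \ A) = S := by
      ext i
      have hS := @h.1 i
      simp only [mem_symmDiff, mem_union, mem_sdiff, mem_compl] at hS ⊢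
      have hA := @h.2 i
      tauto
    simp only [inter_eq, symmDiff_eq, sdiff_eq]
  · rintro ⟨I, J⟩ -
    exact (congr_arg₂ F (recover_left I J) (recover_right I J)).symm

end PairSums

section PairSumIdentity

variable {ι : Type*} [Fintype ι] [LinearOrder ι]

lemma balancedSum_eq_sum_splitSum {R : Type*} [CommRing R] (u : ℤ → ℤ) (c d e f k : ℕ) (x : ι → R)
    {F C : Finset ι → Finset ι → R}
    (hF : ∀ K A B, Disjoint K (A ∪ B) → Disjoint A B →
      F (K ∪ A) (K ∪ B) = C K (A ∪ B) * splitTerm c d e f x A B) :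
    balancedSum u k F = ∑ K, ∑ S ∈ Kᶜ.powerset,
      if 2 * #K + #S = 2 * k then C K S * splitSum u c d e f x S else 0 := by
  rw [balancedSum, sum_pairs_eq_sum_splittings]
  refine sum_congr rfl fun K _ ↦ sum_congr rfl fun S hS ↦ ?_
  have hKS : Disjoint K S := disjoint_left.2 fun i hK hS' ↦
    mem_compl.1 (mem_powerset.1 hS hS') hK
  rw [splitSum, mul_sum, ite_sum_zero]
  refine sum_congr rfl fun A hA ↦ ?_
  have hAS := mem_powerset.1 hA
  have hcard := card_sdiff_add_card_eq_card hAS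
  rw [card_union_of_disjoint (hKS.mono_right hAS), card_union_of_disjoint
    (hKS.mono_right sdiff_subset), hF K A (S \ A) (by rwa [union_sdiff_of_subset hAS])
    disjoint_sdiff, union_sdiff_of_subset hAS]
  congr 1
  · rw [eq_iff_iff]; omega
  · push_cast
    rw [add_sub_add_left_eq_sub]
    ring

theorem two_pow_mul_balancedSum {𝕜 : Type*} [Field 𝕜] {l : ℕ} (hl : l ≤ 1) (k : ℕ) {x : ι → 𝕜}
    (hx : Function.Injective x) (h2 : (2 : 𝕜) ≠ 0) {F G C : Finset ι → Finset ι → 𝕜}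
    (hF : ∀ K A B, Disjoint K (A ∪ B) → Disjoint A B →
      F (K ∪ A) (K ∪ B) = C K (A ∪ B) / 2 ^ #K * splitTerm 1 0 1 l x A B)
    (hG : ∀ K A B, Disjoint K (A ∪ B) → Disjoint A B →
      G (K ∪ A) (K ∪ B) = C K (A ∪ B) * splitTerm 0 1 l 0 x A B) :
    2 ^ k * balancedSum (imbalanceWeight 0) k F = balancedSum (imbalanceWeight l) k G := by
  rw [balancedSum_eq_sum_splitSum (C := fun K S ↦ C K S / 2 ^ #K) _ _ _ _ _ _ x hF,
    balancedSum_eq_sum_splitSum _ _ _ _ _ _ x hG, mul_sum]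
  refine sum_congr rfl fun K _ ↦ ?_
  rw [mul_sum]
  refine sum_congr rfl fun S _ ↦ ?_
  split_ifs with hcard
  · obtain ⟨m, hm⟩ : ∃ m, k = m + #K := ⟨k - #K, by omega⟩
    have hS : #S = 2 * m := by omega
    rw [← two_pow_mul_splitSum hl hS hx.injOn, hm, pow_add]
    field_simp
  · rw [mul_zero]

end PairSumIdentity

section Determinants

open Matrix

lemma sum_orderEmb_eq_sum_powersetCard {ι M : Type*} [Fintype ι] [LinearOrder ι] [AddCommMonoid M]
    (k : ℕ) (g : Finset ι → M) :
    ∑ e : Fin k ↪o ι, g (univ.map e.toEmbedding) = ∑ I ∈ powersetCard k univ, g I := by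
  refine sum_bij (fun e _ ↦ univ.map e.toEmbedding) (fun e _ ↦ by simp) ?_ ?_ fun _ _ ↦ rfl
  · intro e _ e' _ h
    have range_eq : Set.range e = Set.range e' := by
      simpa using congr_arg ((↑) : Finset ι → Set ι) h
    exact DFunLike.coe_injective ((e.strictMono.range_inj e'.strictMono).1 range_eq)
  · intro I hI
    exact ⟨I.orderEmbOfFin (mem_powersetCard_univ.1 hI), mem_univ _, map_orderEmbOfFin_univ _ _⟩

variable {ι R : Type*} [CommRing R]

lemma det_mul_eq_sum_functions [Fintype ι] {κ : Type*} [Fintype κ] [DecidableEq κ]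
    (A : Matrix κ ι R) (B : Matrix ι κ R) :
    (A * B).det = ∑ p : κ → ι, (∏ r, A r (p r)) * (B.submatrix p id).det := by
  have rows : A * B = fun r ↦ ∑ i, A r i • B i := by
    ext r s
    simp [mul_apply]
  rw [rows]
  refine (detRowAlternating.toMultilinearMap.map_sum fun r i ↦ A r i • B i).trans ?_
  exact sum_congr rfl fun p _ ↦ det_mul_column (fun r ↦ A r (p r)) (B.submatrix p id)

lemma exists_orderEmb_comp_perm [LinearOrder ι] {k : ℕ} {p : Fin k → ι}
    (hp : Function.Injective p) : ∃ (e : Fin k ↪o ι) (σ : Equiv.Perm (Fin k)), e ∘ σ = p := by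
  have sorted : StrictMono (p ∘ Tuple.sort p) :=
    (Tuple.monotone_sort p).strictMono_of_injective (hp.comp (Tuple.sort p).injective)
  exact ⟨OrderEmbedding.ofStrictMono _ sorted, (Tuple.sort p)⁻¹, by ext; simp⟩

lemma orderEmb_comp_perm_injective [LinearOrder ι] (k : ℕ) :
    Function.Injective fun q : (Fin k ↪o ι) × Equiv.Perm (Fin k) ↦ q.1 ∘ q.2 := by
  rintro ⟨e, σ⟩ ⟨e', σ'⟩ h
  have range_eq : Set.range e = Set.range e' := by
    rw [← σ.surjective.range_comp e, ← σ'.surjective.range_comp e']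
    exact congr_arg Set.range h
  obtain rfl : e = e' := DFunLike.coe_injective ((e.strictMono.range_inj e'.strictMono).1 range_eq)
  simpa using Equiv.ext fun r ↦ e.injective (congr_fun h r)

/-- The **Cauchy–Binet formula**. -/
theorem det_mul_eq_sum_orderEmb [Fintype ι] [LinearOrder ι] {k : ℕ} (A : Matrix (Fin k) ι R)
    (B : Matrix ι (Fin k) R) :
    (A * B).det = ∑ e : Fin k ↪o ι, (A.submatrix id e).det * (B.submatrix e id).det := by
  have expand (e : Fin k ↪o ι) : (A.submatrix id e).det * (B.submatrix e id).det =
      ∑ σ : Equiv.Perm (Fin k), (∏ r, A r (e (σ r))) * (B.submatrix (e ∘ σ) id).det := by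
    rw [← det_transpose (A.submatrix id e), det_apply', sum_mul]
    refine sum_congr rfl fun σ _ ↦ ?_
    have permuted_rows := det_permute σ (B.submatrix e id)
    rw [submatrix_submatrix, Function.id_comp] at permuted_rows
    rw [permuted_rows]
    simp only [transpose_apply, submatrix_apply, id_eq]
    ring
  simp only [det_mul_eq_sum_functions, expand, ← univ_product_univ, ← Fintype.sum_prod_type']
  refine (Fintype.sum_of_injective _ (orderEmb_comp_perm_injective k) _ _ (fun p hp ↦ ?_)
    fun q ↦ rfl).symm
  have not_injective : ¬ Function.Injective p := fun hinj ↦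
    let ⟨e, σ, h⟩ := exists_orderEmb_comp_perm hinj
    hp ⟨(e, σ), h⟩
  simp only [Function.Injective, not_forall] at not_injective
  obtain ⟨r, s, hrs, hne⟩ := not_injective
  rw [det_zero_of_row_eq hne (by ext; simp [hrs]), mul_zero]

/-- After one step of Gaussian elimination, the remaining minor is a smaller Cauchy matrix up to
row and column factors. -/
lemma det_cauchy_succ {𝕜 : Type*} [Field 𝕜] {k : ℕ} (x y : Fin (k + 1) → 𝕜)
    (h : ∀ r s, x r + y s ≠ 0) :
    (of fun r s ↦ 1 / (x r + y s)).det =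
      1 / (x 0 + y 0) * ((∏ r : Fin k, (x r.succ - x 0) / (x r.succ + y 0)) *
        ((∏ s : Fin k, (y s.succ - y 0) / (x 0 + y s.succ)) *
          (of fun r s : Fin k ↦ 1 / (x r.succ + y s.succ)).det)) := by
  let pivot (r : Fin (k + 1)) : 𝕜 := if r = 0 then 0 else (x 0 + y 0) / (x r + y 0)
  let reduced : Matrix (Fin (k + 1)) (Fin (k + 1)) 𝕜 := of fun r s ↦
    1 / (x r + y s) - pivot r * (1 / (x 0 + y s))
  have reduce : (of fun r s ↦ 1 / (x r + y s)).det = reduced.det :=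
    det_eq_of_forall_row_eq_smul_add_const pivot 0 (by simp [pivot])
      fun r s ↦ by simp [reduced, pivot]
  have column_zero (r : Fin k) : reduced r.succ 0 = 0 := by
    have := h r.succ 0
    have := h 0 0
    simp only [reduced, pivot, of_apply, Fin.succ_ne_zero, if_false]
    field_simp
    simp
  have minor : reduced.submatrix (Fin.succAbove 0) Fin.succ = of fun r s : Fin k ↦
      (x r.succ - x 0) / (x r.succ + y 0) * of (fun r s : Fin k ↦
        (y s.succ - y 0) / (x 0 + y s.succ) *
          of (fun r s : Fin k ↦ 1 / (x r.succ + y s.succ)) r s) r s := by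
    ext r s
    have := h r.succ 0
    have := h 0 s.succ
    have := h r.succ s.succ
    simp only [reduced, pivot, submatrix_apply, of_apply, Fin.succAbove_zero, Fin.succ_ne_zero,
      if_false]
    field_simp
    ring
  rw [reduce, det_succ_column_zero, Fin.sum_univ_succ, minor, det_mul_column, det_mul_row]
  simp only [column_zero, mul_zero, zero_mul, sum_const_zero, add_zero]
  simp [reduced, pivot]

theorem det_cauchy {𝕜 : Type*} [Field 𝕜] {k : ℕ} (x y : Fin k → 𝕜) (h : ∀ r s, x r + y s ≠ 0) :
    (of fun r s ↦ 1 / (x r + y s)).det =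
      (∏ r, ∏ s ∈ Ioi r, (x s - x r)) * (∏ r, ∏ s ∈ Ioi r, (y s - y r)) /
        ∏ r, ∏ s, (x r + y s) := by
  induction k with
  | zero => simp
  | succ k ih =>
    rw [det_cauchy_succ x y h, ih _ _ fun r s ↦ h _ _]
    simp only [Fin.prod_univ_succ, Fin.prod_Ioi_zero, Fin.prod_Ioi_succ, prod_div_distrib,
      prod_mul_distrib, div_mul_div_comm]
    congr 1 <;> ring

end Determinants

section BimomentDeterminants

open Matrix

variable {ι 𝕜 : Type*} [Field 𝕜]

/-- The `k × k` matrix of bimoments `I_{i+r,j+s}` of the nodes `x` with weights `a`. -/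
def bimomentMatrix [Fintype ι] (x a : ι → 𝕜) (i j k : ℕ) : Matrix (Fin k) (Fin k) 𝕜 :=
  of fun r s ↦ ∑ p, ∑ q, x p ^ (i + r) * x q ^ (j + s) / (x p + x q) * (a p * a q)

/-- The left factor of the bimoment matrix: the weighted powers of the nodes, from the `i`-th on. -/
def powerMatrix (x a : ι → 𝕜) (i k : ℕ) : Matrix (Fin k) ι 𝕜 :=
  of fun r p ↦ x p ^ (i + r) * a p

/-- The Cauchy matrix of the nodes `x`. -/
def cauchyMatrix (x : ι → 𝕜) : Matrix ι ι 𝕜 :=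
  of fun p q ↦ 1 / (x p + x q)

lemma bimomentMatrix_eq_mul [Fintype ι] (x a : ι → 𝕜) (i j k : ℕ) :
    bimomentMatrix x a i j k = powerMatrix x a i k * (cauchyMatrix x * (powerMatrix x a j k)ᵀ) := by
  ext r s
  simp only [bimomentMatrix, powerMatrix, cauchyMatrix, mul_apply, transpose_apply, of_apply,
    mul_sum]
  exact sum_congr rfl fun p _ ↦ sum_congr rfl fun q _ ↦ by ring

lemma transpose_bimomentMatrix [Fintype ι] (x a : ι → 𝕜) (i j k : ℕ) :
    (bimomentMatrix x a i j k)ᵀ = bimomentMatrix x a j i k := by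
  have symmetric : (cauchyMatrix x)ᵀ = cauchyMatrix x := by ext; simp [cauchyMatrix, add_comm]
  simp only [bimomentMatrix_eq_mul, transpose_mul, symmetric, transpose_transpose, Matrix.mul_assoc]

lemma bimomentMatrix_succ_succ [Fintype ι] (x a : ι → 𝕜) (i j k : ℕ) :
    bimomentMatrix x a (i + 1) (j + 1) k = bimomentMatrix x (fun p ↦ x p * a p) i j k := by
  ext r s
  simp only [bimomentMatrix, of_apply]
  exact sum_congr rfl fun p _ ↦ sum_congr rfl fun q _ ↦ by ring

lemma det_powerMatrix_submatrix {k : ℕ} (x a : ι → 𝕜) (i : ℕ) (e : Fin k → ι) :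
    ((powerMatrix x a i k).submatrix id e).det =
      (∏ r, x (e r) ^ i * a (e r)) * ∏ r, ∏ s ∈ Ioi r, (x (e s) - x (e r)) := by
  rw [← det_vandermonde, ← det_transpose (vandermonde _), ← det_mul_row]
  congr 1
  ext r s
  simp only [powerMatrix, submatrix_apply, of_apply, transpose_apply, vandermonde_apply, id_eq]
  ring

lemma det_cauchyMatrix_submatrix {k : ℕ} {x : ι → 𝕜} (hx : ∀ p q, x p + x q ≠ 0)
    (e e' : Fin k → ι) :
    ((cauchyMatrix x).submatrix e e').det =
      (∏ r, ∏ s ∈ Ioi r, (x (e s) - x (e r))) * (∏ r, ∏ s ∈ Ioi r, (x (e' s) - x (e' r))) /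
        ∏ r, ∏ s, (x (e r) + x (e' s)) :=
  det_cauchy (x ∘ e) (x ∘ e') fun _ _ ↦ hx _ _

lemma crossProd_pairSum_ne_zero {x : ι → 𝕜} (hx : ∀ p q, x p + x q ≠ 0) (A B : Finset ι) :
    crossProd (pairSum x) A B ≠ 0 :=
  prod_ne_zero_iff.2 fun p _ ↦ prod_ne_zero_iff.2 fun q _ ↦ hx q p

variable [LinearOrder ι]

lemma pairProd_pairSum_ne_zero {x : ι → 𝕜} (hx : ∀ p q, x p + x q ≠ 0) (A : Finset ι) :
    pairProd (pairSum x) A ≠ 0 := by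
  refine prod_ne_zero_iff.2 fun p _ ↦ prod_ne_zero_iff.2 fun q _ ↦ ?_
  split_ifs
  exacts [hx q p, one_ne_zero]

/-- The contribution of the node sets `I` and `J` to the determinant of `bimomentMatrix x a i j`. -/
def bimomentTerm (x a : ι → 𝕜) (i j : ℕ) (I J : Finset ι) : 𝕜 :=
  (∏ p ∈ I, x p ^ i * a p) * (∏ p ∈ J, x p ^ j * a p) *
    (pairProd (diffSq x) I * pairProd (diffSq x) J) / crossProd (pairSum x) I J

theorem det_bimomentMatrix [Fintype ι] {x : ι → 𝕜} (hx : ∀ p q, x p + x q ≠ 0) (a : ι → 𝕜)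
    (i j k : ℕ) :
    (bimomentMatrix x a i j k).det =
      ∑ I ∈ powersetCard k univ, ∑ J ∈ powersetCard k univ, bimomentTerm x a i j I J := by
  simp only [← sum_orderEmb_eq_sum_powersetCard, bimomentMatrix_eq_mul]
  rw [det_mul_eq_sum_orderEmb]
  refine sum_congr rfl fun e _ ↦ ?_
  have right_factor : (cauchyMatrix x * (powerMatrix x a j k)ᵀ).submatrix e id =
      (cauchyMatrix x).submatrix e id * (powerMatrix x a j k)ᵀ := rfl
  rw [right_factor, det_mul_eq_sum_orderEmb, mul_sum]
  refine sum_congr rfl fun e' _ ↦ ?_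
  have right_minor := det_powerMatrix_submatrix x a j e'
  rw [← det_transpose, transpose_submatrix] at right_minor
  rw [det_powerMatrix_submatrix, right_minor, submatrix_submatrix, Function.id_comp,
    Function.comp_id, det_cauchyMatrix_submatrix hx]
  simp only [bimomentTerm, crossProd, pairProd_map_orderEmb, prod_map, RelEmbedding.coe_toEmbedding,
    diffSq, prod_pow, pairSum, add_comm]
  ring

/-- The contribution `Δ_I² / Γ_I * ∏ a` of the node set `I` to `nodeSum x a`. -/
def nodeTerm (x a : ι → 𝕜) (I : Finset ι) : 𝕜 :=
  pairProd (diffSq x) I / pairProd (pairSum x) I * ∏ p ∈ I, a p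

/-- The sum `U_k` of the nodes `x` with weights `a`; `V_k` is the same sum for the weights `x a`. -/
def nodeSum [Fintype ι] (x a : ι → 𝕜) (k : ℕ) : 𝕜 :=
  ∑ I ∈ powersetCard k univ, nodeTerm x a I

/-- The part of the contributions of a pair of node sets that depends only on their intersection `K`
and symmetric difference `S`. -/
def commonFactor (x a : ι → 𝕜) (l : ℕ) (K S : Finset ι) : 𝕜 :=
  (∏ p ∈ K, x p) ^ l * (∏ p ∈ K, a p) ^ 2 * (∏ p ∈ S, a p) *
    (pairProd (diffSq x) K ^ 2 * crossProd (diffSq x) K S) /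
    (pairProd (pairSum x) K ^ 2 * crossProd (pairSum x) K S * pairProd (pairSum x) S)

variable {x : ι → 𝕜} (a : ι → 𝕜) (l : ℕ) {K A B : Finset ι}

lemma bimomentTerm_union (hx : ∀ p q, x p + x q ≠ 0) (hK : Disjoint K (A ∪ B))
    (hAB : Disjoint A B) :
    bimomentTerm x a 1 l (K ∪ A) (K ∪ B) =
      commonFactor x a l K (A ∪ B) / 2 ^ #K * splitTerm 1 0 1 l x A B := by
  obtain ⟨hKA, hKB⟩ := disjoint_union_right.1 hK
  have nodes_ne_zero : ∏ p ∈ K, x p ≠ 0 :=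
    prod_ne_zero_iff.2 fun p _ h ↦ hx p p (by rw [h, add_zero])
  have pairs_ne_zero := mul_ne_zero (pairProd_pairSum_ne_zero hx A) (pairProd_pairSum_ne_zero hx B)
  rw [← mul_one (bimomentTerm x a 1 l _ _), ← mul_inv_cancel₀ pairs_ne_zero,
    ← mul_one (splitTerm 1 0 1 l x A B), ← mul_inv_cancel₀ nodes_ne_zero]
  simp only [bimomentTerm, commonFactor, splitTerm, pairProd_union (diffSq_comm x) hKA,
    pairProd_union (diffSq_comm x) hKB, pairProd_union (pairSum_comm x) hAB,
    crossProd_union_left _ hKA, crossProd_union_right (pairSum_comm x) _ hKB,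
    crossProd_union_right (pairSum_comm x) _ hAB, crossProd_union_right (diffSq_comm x) _ hAB,
    crossProd_pairSum_self, crossProd_comm (pairSum_comm x) A K, prod_union hKA, prod_union hKB,
    prod_union hAB, prod_mul_distrib, prod_pow]
  ring

lemma nodeTerm_mul_nodeTerm_union (hx : ∀ p q, x p + x q ≠ 0) (hK : Disjoint K (A ∪ B))
    (hAB : Disjoint A B) :
    nodeTerm x (fun p ↦ x p ^ l * a p) (K ∪ A) * nodeTerm x a (K ∪ B) =
      commonFactor x a l K (A ∪ B) * splitTerm 0 1 l 0 x A B := by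
  obtain ⟨hKA, hKB⟩ := disjoint_union_right.1 hK
  rw [← mul_one (_ * _), ← mul_inv_cancel₀ (crossProd_pairSum_ne_zero hx A B)]
  simp only [nodeTerm, commonFactor, splitTerm, pairProd_union (diffSq_comm x) hKA,
    pairProd_union (diffSq_comm x) hKB, pairProd_union (pairSum_comm x) hAB,
    pairProd_union (pairSum_comm x) hKA, pairProd_union (pairSum_comm x) hKB,
    crossProd_union_right (pairSum_comm x) _ hAB, crossProd_union_right (diffSq_comm x) _ hAB,
    prod_union hKA, prod_union hKB, prod_union hAB, prod_mul_distrib, prod_pow]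
  ring

theorem two_pow_mul_det_bimomentMatrix [Fintype ι] (hx : ∀ p q, x p + x q ≠ 0)
    (hinj : Function.Injective x) {l : ℕ} (hl : l ≤ 1) (k : ℕ) :
    2 ^ (k + 1) * (bimomentMatrix x a 1 l (k + 1)).det =
      nodeSum x (fun p ↦ x p ^ l * a p) (k + 1) * nodeSum x a (k + 1) -
        l * (nodeSum x (fun p ↦ x p ^ l * a p) k * nodeSum x a (k + 2)) := by
  cases isEmpty_or_nonempty ι with
  | inl h =>
    have no_nodes (j : ℕ) : powersetCard (j + 1) (univ : Finset ι) = ∅ :=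
      powersetCard_eq_empty.2 (by simp)
    simp only [nodeSum, det_bimomentMatrix hx, no_nodes, sum_empty, mul_zero, sub_zero]
  | inr h =>
    obtain ⟨p⟩ := h
    have two_ne_zero : (2 : 𝕜) ≠ 0 := fun h ↦ hx p p (by rw [← two_mul, h, zero_mul])
    have expansion : balancedSum (imbalanceWeight 0) (k + 1) (bimomentTerm x a 1 l) =
        (bimomentMatrix x a 1 l (k + 1)).det := by
      rw [balancedSum_imbalanceWeight, det_bimomentMatrix hx, Nat.cast_zero, zero_mul, sub_zero]
    rw [← expansion, two_pow_mul_balancedSum hl _ hinj two_ne_zero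
      (G := fun I J ↦ nodeTerm x (fun p ↦ x p ^ l * a p) I * nodeTerm x a J)
      (fun K A B ↦ bimomentTerm_union a l hx) (fun K A B ↦ nodeTerm_mul_nodeTerm_union a l hx),
      balancedSum_imbalanceWeight]
    simp only [nodeSum, sum_mul_sum]

variable [Fintype ι] [CharZero 𝕜]

lemma det_bimomentMatrix_one_zero (hx : ∀ p q, x p + x q ≠ 0) (hinj : Function.Injective x)
    (k : ℕ) : (bimomentMatrix x a 1 0 (k + 1)).det = nodeSum x a (k + 1) ^ 2 / 2 ^ (k + 1) := by
  have h := two_pow_mul_det_bimomentMatrix a hx hinj zero_le_one k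
  simp only [pow_zero, one_mul, Nat.cast_zero, zero_mul, sub_zero] at h
  rw [eq_div_iff (pow_ne_zero _ two_ne_zero), mul_comm, h, sq]

lemma det_bimomentMatrix_one_one (hx : ∀ p q, x p + x q ≠ 0) (hinj : Function.Injective x)
    (k : ℕ) : (bimomentMatrix x a 1 1 (k + 1)).det =
      (nodeSum x (fun p ↦ x p * a p) (k + 1) * nodeSum x a (k + 1) -
        nodeSum x (fun p ↦ x p * a p) k * nodeSum x a (k + 2)) / 2 ^ (k + 1) := by
  have h := two_pow_mul_det_bimomentMatrix a hx hinj le_rfl k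
  simp only [pow_one, Nat.cast_one, one_mul] at h
  rw [eq_div_iff (pow_ne_zero _ two_ne_zero), mul_comm, h]

end BimomentDeterminants

section OrderedField

variable {ι 𝕜 : Type*} [Fintype ι] [LinearOrder ι] [Field 𝕜] [LinearOrder 𝕜] [IsStrictOrderedRing 𝕜]
  {x a : ι → 𝕜}

lemma det_bimomentMatrix_pos (hx0 : ∀ p, 0 < x p) (hx : Function.Injective x) (ha : ∀ p, 0 < a p)
    (i j : ℕ) {k : ℕ} (hk : k ≤ Fintype.card ι) : 0 < (bimomentMatrix x a i j k).det := by
  have subsets_nonempty : (powersetCard k (univ : Finset ι)).Nonempty :=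
    powersetCard_nonempty.2 hk
  have weights_pos (i : ℕ) (I : Finset ι) : 0 < ∏ p ∈ I, x p ^ i * a p :=
    prod_pos fun p _ ↦ mul_pos (pow_pos (hx0 p) i) (ha p)
  have discr_pos (I : Finset ι) : 0 < pairProd (diffSq x) I := by
    refine prod_pos fun p _ ↦ prod_pos fun q _ ↦ ?_
    split_ifs with hpq
    · exact sq_pos_of_ne_zero (sub_ne_zero.2 (hx.ne hpq.ne'))
    · exact one_pos
  have cross_pos (I J : Finset ι) : 0 < crossProd (pairSum x) I J :=
    prod_pos fun p _ ↦ prod_pos fun q _ ↦ add_pos (hx0 q) (hx0 p)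
  rw [det_bimomentMatrix fun p q ↦ (add_pos (hx0 p) (hx0 q)).ne']
  exact sum_pos (fun I _ ↦ sum_pos (fun J _ ↦ div_pos (mul_pos
    (mul_pos (weights_pos i I) (weights_pos j J)) (mul_pos (discr_pos I) (discr_pos J)))
    (cross_pos I J)) subsets_nonempty) subsets_nonempty

theorem stmt_0_general (hx0 : ∀ p, 0 < x p) (hx : Function.Injective x) (ha : ∀ p, 0 < a p)
    {k : ℕ} (hk : k + 1 ≤ Fintype.card ι) :
    let F (i j : ℕ) : 𝕜 := (bimomentMatrix x a i j (k + 1)).det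
    let U := nodeSum x a
    let V := nodeSum x fun p ↦ x p * a p
    F 1 0 = U (k + 1) ^ 2 / 2 ^ (k + 1) ∧
    F 0 1 = U (k + 1) ^ 2 / 2 ^ (k + 1) ∧
    F 1 1 = (V (k + 1) * U (k + 1) - V k * U (k + 2)) / 2 ^ (k + 1) ∧
    F 2 1 = V (k + 1) ^ 2 / 2 ^ (k + 1) ∧
    F 1 2 = V (k + 1) ^ 2 / 2 ^ (k + 1) ∧
    0 < F 1 0 ∧ 0 < F 1 1 ∧ 0 < F 2 1 := by
  intro F U V
  have symmetric (i j : ℕ) : F i j = F j i := by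
    simp only [F, ← transpose_bimomentMatrix x a j, Matrix.det_transpose]
  have hx2 (p q : ι) : x p + x q ≠ 0 := (add_pos (hx0 p) (hx0 q)).ne'
  have F10 : F 1 0 = U (k + 1) ^ 2 / 2 ^ (k + 1) := det_bimomentMatrix_one_zero a hx2 hx k
  have F21 : F 2 1 = V (k + 1) ^ 2 / 2 ^ (k + 1) := by
    simp only [F, bimomentMatrix_succ_succ x a 1 0]
    exact det_bimomentMatrix_one_zero _ hx2 hx k
  have F_pos (i j : ℕ) : 0 < F i j := det_bimomentMatrix_pos hx0 hx ha i j hk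
  exact ⟨F10, symmetric 0 1 ▸ F10, det_bimomentMatrix_one_one a hx2 hx k, F21,
    symmetric 1 2 ▸ F21, F_pos 1 0, F_pos 1 1, F_pos 2 1⟩

end OrderedField

section RealNodes

variable {n : ℕ} (ζ a : Fin n → ℝ)

lemma Fdet_natCast (i j k : ℕ) : Fdet n ζ a i j k = (bimomentMatrix ζ a i j k).det := by
  rw [Fdet, if_neg (by simp)]
  simp only [bimomentMatrix, Imom, Int.toNat_natCast, ← Nat.cast_add, zpow_natCast]

lemma nodeTerm_eq (I : Finset (Fin n)) :
    nodeTerm ζ a I = DeltaI n ζ I ^ 2 / GammaI n ζ I * ∏ j ∈ I, a j := by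
  have discr_eq : pairProd (diffSq ζ) I = DeltaI n ζ I ^ 2 := by
    simp only [pairProd, diffSq, DeltaI, ← prod_pow, ite_pow, one_pow]
  rw [nodeTerm, discr_eq]
  rfl

lemma Usum_natCast (k : ℕ) : Usum n ζ a k = nodeSum ζ a k := by
  simp only [Usum, nodeSum, nodeTerm_eq, Int.toNat_natCast]
  split_ifs with h
  · rw [powersetCard_eq_empty.2 (by simp; omega), sum_empty]
  · rfl

lemma Vsum_natCast (k : ℕ) : Vsum n ζ a k = nodeSum ζ (fun p ↦ ζ p * a p) k :=
  Usum_natCast ζ (fun p ↦ ζ p * a p) k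

lemma Wsum_natCast_succ (k : ℕ) : Wsum n ζ a (k + 1 : ℕ) =
    nodeSum ζ (fun p ↦ ζ p * a p) (k + 1) * nodeSum ζ a (k + 1) -
      nodeSum ζ (fun p ↦ ζ p * a p) k * nodeSum ζ a (k + 2) := by
  have pred_eq : ((k + 1 : ℕ) : ℤ) - 1 = k := by simp
  have succ_eq : ((k + 1 : ℕ) : ℤ) + 1 = (k + 2 : ℕ) := rfl
  rw [Wsum, pred_eq, succ_eq]
  simp only [Usum_natCast, Vsum_natCast]

end RealNodes

/-- Lemma 2.4 (first part): for `1 ≤ k ≤ n`,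
`F_k^{(1,0)} = F_k^{(0,1)} = U_k²/2^k`, `F_k^{(1,1)} = W_k/2^k`,
`F_k^{(2,1)} = F_k^{(1,2)} = V_k²/2^k`, and these quantities are positive. -/
theorem stmt_0 (n : ℕ) (hn : 1 ≤ n) (ζ a : Fin n → ℝ)
    (hζ0 : ∀ p, 0 < ζ p) (hζmono : StrictMono ζ) (ha : ∀ p, 0 < a p)
    (k : ℤ) (hk1 : 1 ≤ k) (hkn : k ≤ (n : ℤ)) :
    Fdet n ζ a 1 0 k = Usum n ζ a k ^ 2 / 2 ^ k ∧
    Fdet n ζ a 0 1 k = Usum n ζ a k ^ 2 / 2 ^ k ∧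
    Fdet n ζ a 1 1 k = Wsum n ζ a k / 2 ^ k ∧
    Fdet n ζ a 2 1 k = Vsum n ζ a k ^ 2 / 2 ^ k ∧
    Fdet n ζ a 1 2 k = Vsum n ζ a k ^ 2 / 2 ^ k ∧
    0 < Fdet n ζ a 1 0 k ∧ 0 < Fdet n ζ a 1 1 k ∧ 0 < Fdet n ζ a 2 1 k := by
  obtain ⟨k, rfl⟩ : ∃ m : ℕ, k = (m + 1 : ℕ) := ⟨(k - 1).toNat, by omega⟩
  have general := stmt_0_general hζ0 hζmono.injective ha (k := k) (by simpa using hkn)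
  rw [zpow_natCast, Usum_natCast, Vsum_natCast, Wsum_natCast_succ]
  simpa only [← Fdet_natCast, Nat.cast_ofNat, Nat.cast_one, Nat.cast_zero] using general
end

section
/- For all integers i, j and every integer k ≥ 1, the bimoment determinants satisfy the bilinear identity G_k^{(i,j)} F_{k−1}^{(i,j+1)} = G_k^{(i,j+1)} F_{k−1}^{(i,j)} − G_{k−1}^{(i,j+1)} F_k^{(i,j)}. -/
open Finset

/-!
The vector of signed maximal minors of an `N × (N + 1)` matrix `V` lies in the kernel of `V`, hence
also in the kernel of `V` with its last row deleted. Applying to this linear dependency between the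
columns of the smaller matrix the functional `x ↦ det [x, W]`, where `W` consists of all columns
except the first two and the last, leaves three terms: a three-term Plücker relation. For
`V = [α, I_j, …, I_{j+k-1}]` with `k` rows, it is the bilinear identity between the determinants
`F` and `G`.
-/

section DeterminantIdentities

variable {R ι : Type*} [CommRing R] {m : ℕ}

/-- The signed maximal minors of a matrix with one more column than rows, indexed by the deleted
column. They generalize the cross product of two vectors in three-space and give an explicit linear
dependency between the columns. -/
def signedMaximalMinors (V : Matrix (Fin m) (Fin (m + 1)) R) (s : Fin (m + 1)) : R :=
  (-1) ^ (s : ℕ) * (V.submatrix id s.succAbove).det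

theorem mulVec_signedMaximalMinors (V : Matrix (Fin m) (Fin (m + 1)) R) :
    V.mulVec (signedMaximalMinors V) = 0 := by
  ext r
  let rowRepeated : Matrix (Fin (m + 1)) (Fin (m + 1)) R := V.submatrix (Fin.cons r id) id
  have det_eq_zero : rowRepeated.det = 0 :=
    Matrix.det_zero_of_row_eq (Fin.succ_ne_zero r).symm rfl
  calc V.mulVec (signedMaximalMinors V) r
      = ∑ s, V r s * ((-1) ^ (s : ℕ) * (V.submatrix id s.succAbove).det) := rfl
    _ = ∑ s : Fin (m + 1), (-1) ^ (s : ℕ) * V r s * (V.submatrix id s.succAbove).det :=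
        Finset.sum_congr rfl fun _ _ => by ring
    _ = rowRepeated.det := (Matrix.det_succ_row_zero rowRepeated).symm
    _ = 0 := det_eq_zero

theorem sum_mul_det_submatrix_cons_eq_zero [Fintype ι] {U : Matrix (Fin (m + 1)) ι R} {c : ι → R}
    (hc : U.mulVec c = 0) (w : Fin m → ι) :
    ∑ s, c s * (U.submatrix id (Fin.cons s w : Fin (m + 1) → ι)).det = 0 := by
  have expand (s : ι) : (U.submatrix id (Fin.cons s w : Fin (m + 1) → ι)).det =
      ∑ r : Fin (m + 1), (-1) ^ (r : ℕ) * U r s * (U.submatrix r.succAbove w).det :=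
    Matrix.det_succ_column_zero _
  calc ∑ s, c s * (U.submatrix id (Fin.cons s w : Fin (m + 1) → ι)).det
      = ∑ r : Fin (m + 1),
          (-1) ^ (r : ℕ) * (U.submatrix r.succAbove w).det * U.mulVec c r := by
        simp only [expand, Matrix.mulVec, dotProduct, Finset.mul_sum]
        rw [Finset.sum_comm]
        exact Finset.sum_congr rfl fun r _ => Finset.sum_congr rfl fun s _ => by ring
    _ = 0 := by simp [hc]

theorem det_submatrix_snoc (U : Matrix (Fin (m + 1)) ι R) (w : Fin m → ι) (s : ι) :
    (U.submatrix id (Fin.snoc w s : Fin (m + 1) → ι)).det =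
      (-1) ^ m * (U.submatrix id (Fin.cons s w : Fin (m + 1) → ι)).det := by
  have rotate := Matrix.det_permute' (finRotate (m + 1))
    (U.submatrix id (Fin.cons s w : Fin (m + 1) → ι))
  rw [sign_finRotate, Nat.add_sub_cancel] at rotate
  rw [Fin.snoc_eq_cons_rotate]
  exact_mod_cast rotate

theorem three_term_relation_of_mulVec_eq_zero {U : Matrix (Fin (m + 1)) (Fin (m + 3)) R}
    {c : Fin (m + 3) → R} (hc : U.mulVec c = 0) :
    c 0 * (U.submatrix id fun t => (Fin.succAbove 1 t).castSucc).det +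
        c 1 * (U.submatrix id fun t => t.castSucc.succ).det +
        (-1) ^ m * c (Fin.last (m + 2)) * (U.submatrix id fun t => t.succ.succ).det = 0 := by
  let w : Fin m → Fin (m + 3) := fun t => t.castSucc.succ.succ
  have cons_zero : (Fin.cons 0 w : Fin (m + 1) → _) = fun t => (Fin.succAbove 1 t).castSucc := by
    ext t; cases t using Fin.cases <;> simp [w]
  have cons_one : (Fin.cons 1 w : Fin (m + 1) → _) = fun t => t.castSucc.succ := by
    ext t; cases t using Fin.cases <;> simp [w]
  have snoc_last : (Fin.snoc w (Fin.last (m + 2)) : Fin (m + 1) → Fin (m + 3)) =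
      fun t => t.succ.succ := by
    ext t; cases t using Fin.lastCases <;> simp [w]
  have det_cons_middle (t : Fin m) :
      (U.submatrix id (Fin.cons t.castSucc.succ.succ w : Fin (m + 1) → _)).det = 0 :=
    Matrix.det_zero_of_column_eq (Fin.succ_ne_zero t).symm fun _ => rfl
  have relation := sum_mul_det_submatrix_cons_eq_zero hc w
  rw [Fin.sum_univ_succ, Fin.sum_univ_succ, Fin.sum_univ_castSucc] at relation
  simp only [det_cons_middle, mul_zero, Finset.sum_const_zero, zero_add, Fin.succ_zero_eq_one,
    Fin.succ_last, cons_zero, cons_one] at relation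
  rw [← snoc_last, det_submatrix_snoc, mul_right_comm, ← mul_assoc, ← mul_pow]
  simpa [add_assoc, mul_comm] using relation

theorem det_submatrix_three_term_plucker (V : Matrix (Fin (m + 2)) (Fin (m + 3)) R)
    (f : Fin (m + 1) → Fin (m + 2)) :
    (V.submatrix id Fin.castSucc).det * (V.submatrix f fun t => t.succ.succ).det =
      (V.submatrix id (Fin.succAbove 1)).det * (V.submatrix f fun t => t.castSucc.succ).det -
        (V.submatrix f fun t => (Fin.succAbove 1 t).castSucc).det *
          (V.submatrix id Fin.succ).det := by
  have dependency : (V.submatrix f id).mulVec (signedMaximalMinors V) = 0 :=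
    funext fun r => congrFun (mulVec_signedMaximalMinors V) (f r)
  have relation := three_term_relation_of_mulVec_eq_zero dependency
  have sign_cancel : (-1 : R) ^ m * (-1) ^ (m + 2) = 1 := by
    rw [← pow_add]; exact Even.neg_one_pow ⟨m + 1, by ring⟩
  simp only [signedMaximalMinors, Matrix.submatrix_submatrix, Function.id_comp,
    Function.comp_id, Fin.val_zero, Fin.val_one, Fin.val_last, Fin.succAbove_zero,
    Fin.succAbove_last, ← mul_assoc, sign_cancel] at relation
  linear_combination relation

/-- The `k × k` minor of the infinite array `I` on consecutive rows and columns starting at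
`(i, j)`. Like `Fdet`, it is `1` for `k = 0` and, by convention, `0` for `k < 0`. -/
def solidMinor (I : ℤ → ℤ → R) (i j k : ℤ) : R :=
  if k < 0 then 0
  else Matrix.det (Matrix.of fun r s : Fin k.toNat => I (i + ((r : ℕ) : ℤ)) (j + ((s : ℕ) : ℤ)))

/-- The determinant of the `k × (k - 1)` solid block of `I` starting at `(i, j)`, bordered on the
left by the column `α_{i-1}, …, α_{i+k-2}`. Like `Gdet`, it is `0` for `k < 1` by convention. -/
def borderedSolidMinor (α : ℤ → R) (I : ℤ → ℤ → R) (i j k : ℤ) : R :=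
  if k < 1 then 0
  else Matrix.det (Matrix.of fun r s : Fin k.toNat =>
    if (s : ℕ) = 0 then α (i - 1 + ((r : ℕ) : ℤ))
    else I (i + ((r : ℕ) : ℤ)) (j + (((s : ℕ) - 1 : ℕ) : ℤ)))

theorem solidMinor_natCast (I : ℤ → ℤ → R) (i j : ℤ) (m : ℕ) :
    solidMinor I i j m = (Matrix.of fun r s : Fin m => I (i + (r : ℕ)) (j + (s : ℕ))).det :=
  if_neg (Int.natCast_nonneg m).not_gt

theorem borderedSolidMinor_natCast_succ (α : ℤ → R) (I : ℤ → ℤ → R) (i j : ℤ) (m : ℕ) :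
    borderedSolidMinor α I i j (m + 1 : ℕ) =
      (Matrix.of fun r : Fin (m + 1) => (Fin.cons (α (i - 1 + (r : ℕ)))
        fun s : Fin m => I (i + (r : ℕ)) (j + (s : ℕ)) : Fin (m + 1) → R)).det := by
  rw [borderedSolidMinor, if_neg (by omega)]
  congr 1
  ext r s
  cases s using Fin.cases <;> simp

theorem stmt_6_general (α : ℤ → R) (I : ℤ → ℤ → R) (i j : ℤ) {k : ℤ} (hk : 1 ≤ k) :
    borderedSolidMinor α I i j k * solidMinor I i (j + 1) (k - 1) =
      borderedSolidMinor α I i (j + 1) k * solidMinor I i j (k - 1) -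
        borderedSolidMinor α I i (j + 1) (k - 1) * solidMinor I i j k := by
  obtain ⟨m, rfl⟩ : ∃ m : ℕ, k = (m + 1 : ℕ) := ⟨(k - 1).toNat, by omega⟩
  rw [Nat.cast_succ, add_sub_cancel_right, ← Nat.cast_succ]
  cases m with
  | zero => simp [borderedSolidMinor, solidMinor]
  | succ m =>
    let V : Matrix (Fin (m + 2)) (Fin (m + 3)) R := Matrix.of fun r =>
      Fin.cons (α (i - 1 + (r : ℕ))) fun s : Fin (m + 2) => I (i + (r : ℕ)) (j + (s : ℕ))
    simp only [solidMinor_natCast, borderedSolidMinor_natCast_succ]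
    have shift (s : ℤ) : j + 1 + s = j + (s + 1) := by ring
    convert det_submatrix_three_term_plucker V Fin.castSucc using 4 <;> ext r s
    · cases s using Fin.cases <;> simp [V]
    · simp [V, shift]
    · cases s using Fin.cases <;> simp [V, shift]
    · simp [V]
    · cases s using Fin.cases <;> simp [V, shift]
    · simp [V]

end DeterminantIdentities

/-- Lemma 2.8, identity (2.15): for all `i, j ∈ ℤ` and `k ≥ 1`,
`G_k^{(i,j)} F_{k-1}^{(i,j+1)} = G_k^{(i,j+1)} F_{k-1}^{(i,j)} - G_{k-1}^{(i,j+1)} F_k^{(i,j)}`. -/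
theorem stmt_6 (n : ℕ) (hn : 1 ≤ n) (ζ a : Fin n → ℝ)
    (hζ0 : ∀ p, 0 < ζ p) (hζmono : StrictMono ζ) (ha : ∀ p, 0 < a p)
    (i j k : ℤ) (hk : 1 ≤ k) :
    Gdet n ζ a i j k * Fdet n ζ a i (j + 1) (k - 1) =
      Gdet n ζ a i (j + 1) k * Fdet n ζ a i j (k - 1) -
        Gdet n ζ a i (j + 1) (k - 1) * Fdet n ζ a i j k :=
  stmt_6_general (alphaM n ζ a) (Imom n ζ a) i j hk
end
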